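/- For every integer p ≥ 6, the Ramsey–Turán density satisfies ρ_p(p+6) ≤ 8/(3p); equivalently, for every δ > 0 there exist ε > 0 and n_0 such that every K_{p+6}-free graph G on n ≥ n_0 vertices with α_p(G) ≤ ε·n has at most (8/(3p) + δ)·C(n,2) edges. -/

import Mathlib

/-!
Apply Szemerédi's regularity lemma and give each regular pair of clusters its density as a weight
(weight `0` when the pair is irregular or has density below `2η`). Since `α_p(G)` is a tiny
fraction of `n`, every set of linear size contains a `K_p`. This has two consequences.

* A regular pair `(A, B)` of density above `(w - 1) / p` contains a `K_{p+w}`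
  (`exists_clique_in_pair`): take a `K_p` of typical vertices of `A`. On average a vertex of `B` has
  more than `w - 1` neighbours in it, so by pigeonhole some `w` of its vertices have linearly many
  common neighbours in `B`, among which there is a `K_p`.
* If the pair lies in a `t`-clique of clusters of positive weight, one typical vertex from each of
  the other `t - 2` clusters can be chosen first, giving a `K_{p+w+t-2}`
  (`exists_clique_of_family`).

Hence, `G` being `K_{p+6}`-free, all weights inside a `t`-clique of the weighted reduced graph are
at most about `(7 - t) / p`, and `t ≤ 6` (`reducedWeight_lt`). By Motzkin–Straus symmetrization
(`exists_clique_support`) the quadratic form of the weights on the simplex is largest on a vector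
supported on a clique, so it is at most `max_t (1 - 1/t) (7 - t) / p = 8 / (3p)`, attained at
`t = 3` (`quadForm_le`). Evaluated at the vector of relative cluster sizes this form is
`2 e(G) / n²` up to a small error (`two_mul_edgeCount_le`).
-/

open Finset
open scoped Classical

/-- `α_p(G)`: the largest size of a vertex subset inducing a `K_p`-free subgraph. -/
noncomputable def alphaP {V : Type} [Fintype V] (p : ℕ) (G : SimpleGraph V) : ℕ :=
  sSup {k : ℕ | ∃ s : Finset V, s.card = k ∧ ∀ t : Finset V, t ⊆ s → ¬ G.IsNClique p t}

/-- The number of edges of `G`. -/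
noncomputable def edgeCount {V : Type} [Fintype V] (G : SimpleGraph V) : ℕ :=
  G.edgeSet.ncard

/-! ### Cliques in dense regular families -/

/-- `HasLowerDensity G m d X Y`: any two subsets of `X` and `Y` having at least `m` elements
span edge density at least `d`. This is the part of `ε`-uniformity used by the embedding. -/
def HasLowerDensity {V : Type} [Fintype V] (G : SimpleGraph V) (m d : ℝ)
    (X Y : Finset V) : Prop :=
  ∀ X' ⊆ X, ∀ Y' ⊆ Y, m ≤ (#X' : ℝ) → m ≤ (#Y' : ℝ) → d ≤ (G.edgeDensity X' Y' : ℝ)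

theorem HasLowerDensity.subset {V : Type} [Fintype V] {G : SimpleGraph V} {m d : ℝ}
    {X Y X' Y' : Finset V} (h : HasLowerDensity G m d X Y) (hX : X' ⊆ X) (hY : Y' ⊆ Y) :
    HasLowerDensity G m d X' Y' :=
  fun A hA B hB => h A (hA.trans hX) B (hB.trans hY)

theorem card_interedges_eq_sum {V : Type} [Fintype V] (G : SimpleGraph V) (X Y : Finset V) :
    #(G.interedges X Y) = ∑ x ∈ X, #{y ∈ Y | G.Adj x y} := by
  simp only [SimpleGraph.interedges, Rel.interedges, card_filter, sum_product]

theorem two_mul_edgeCount {V : Type} [Fintype V] (G : SimpleGraph V) :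
    2 * G.edgeSet.ncard = #(G.interedges univ univ) := by
  rw [card_interedges_eq_sum, Set.ncard_eq_toFinset_card', ← SimpleGraph.edgeFinset,
    ← G.sum_degrees_eq_twice_card_edges]
  refine sum_congr rfl fun x _ => ?_
  rw [← SimpleGraph.card_neighborFinset_eq_degree]
  congr 1
  ext y; simp

theorem card_interedges_eq_density {V : Type} [Fintype V] (G : SimpleGraph V) (X Y : Finset V) :
    (#(G.interedges X Y) : ℝ) = (G.edgeDensity X Y : ℝ) * #X * #Y := by
  rw [SimpleGraph.edgeDensity_def]
  push_cast
  rcases X.eq_empty_or_nonempty with rfl | hX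
  · simp
  rcases Y.eq_empty_or_nonempty with rfl | hY
  · simp [SimpleGraph.interedges, Rel.interedges]
  have h1 : (#X : ℝ) ≠ 0 := by simpa using hX.ne_empty
  have h2 : (#Y : ℝ) ≠ 0 := by simpa using hY.ne_empty
  field_simp

/-- Fewer than `m` vertices of `X` have atypically small degree into `Y`. -/
theorem HasLowerDensity.card_atypical_lt {V : Type} [Fintype V] {G : SimpleGraph V} {m d : ℝ}
    {X Y : Finset V} (hm : 0 < m) (h : HasLowerDensity G m d X Y) (hY : m ≤ (#Y : ℝ)) :
    (#{x ∈ X | (#{y ∈ Y | G.Adj x y} : ℝ) < d * #Y} : ℝ) < m := by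
  by_contra! hcon
  set X' := {x ∈ X | (#{y ∈ Y | G.Adj x y} : ℝ) < d * #Y} with hX'
  have h1 := h X' (filter_subset _ _) Y subset_rfl hcon hY
  have h2 := card_interedges_eq_density G X' Y
  rw [card_interedges_eq_sum] at h2
  push_cast at h2
  have hne : X'.Nonempty := by
    rw [← card_pos]; exact_mod_cast hm.trans_le hcon
  have h3 : ∑ x ∈ X', (#{y ∈ Y | G.Adj x y} : ℝ) < ∑ x ∈ X', d * #Y :=
    sum_lt_sum_of_nonempty hne fun x hx => (mem_filter.1 hx).2
  rw [sum_const, nsmul_eq_mul, h2] at h3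
  have h4 : d * (#X' * #Y) ≤ (G.edgeDensity X' Y : ℝ) * (#X' * #Y) := by gcongr
  nlinarith

/-- Two linear-sized sets of density above `(w - 1) / p` contain a `K_{p+w}`: some `K_p` among the
typical vertices of `A` has `w` vertices with many common neighbours in `B`. -/
theorem exists_clique_in_pair {V : Type} [Fintype V] {G : SimpleGraph V} {p w : ℕ}
    {a m M η d : ℝ} {A B : Finset V} (hm : 0 < m) (ham : a < m) (hmM : 2 * m ≤ M)
    (ha0 : 0 ≤ a) (ha : 2 ^ p * a < η * M) (hp : 0 < p) (hη : 0 < η) (hw : 1 ≤ w)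
    (hd : (w : ℝ) - 1 + p * η ≤ d * p)
    (hG : ∀ s : Finset V, a < (#s : ℝ) → ∃ t ⊆ s, G.IsNClique p t)
    (hA : M ≤ (#A : ℝ)) (hB : M ≤ (#B : ℝ)) (hAB : HasLowerDensity G m d A B) :
    ∃ s ⊆ A ∪ B, G.IsNClique (p + w) s := by
  have hbad := hAB.card_atypical_lt hm (by linarith)
  have hsplit := card_filter_add_card_filter_not (s := A)
    (fun x => (#{y ∈ B | G.Adj x y} : ℝ) < d * #B)
  have hsplit' : (#{x ∈ A | (#{y ∈ B | G.Adj x y} : ℝ) < d * #B} : ℝ)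
    + #{x ∈ A | ¬ (#{y ∈ B | G.Adj x y} : ℝ) < d * #B} = #A := by exact_mod_cast hsplit
  obtain ⟨T, hTA, hT⟩ := hG {x ∈ A | ¬ (#{y ∈ B | G.Adj x y} : ℝ) < d * #B} (by linarith)
  have hTA' : T ⊆ A := hTA.trans (filter_subset _ _)
  have hdeg : ∀ x ∈ T, d * #B ≤ (#{y ∈ B | G.Adj x y} : ℝ) := fun x hx =>
    not_lt.1 (mem_filter.1 (hTA hx)).2
  have hB0 : (0 : ℝ) < #B := by linarith
  -- Double counting of the edges between `T` and `B`.
  have hdouble : ∑ x ∈ T, (#{y ∈ B | G.Adj x y} : ℝ) = ∑ y ∈ B, (#{x ∈ T | G.Adj x y} : ℝ) := by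
    have := sum_card_bipartiteAbove_eq_sum_card_bipartiteBelow (s := T) (t := B) G.Adj
    simp only [bipartiteAbove, bipartiteBelow] at this
    exact_mod_cast this
  have hlow : ((w : ℝ) - 1 + p * η) * #B ≤ ∑ y ∈ B, (#{x ∈ T | G.Adj x y} : ℝ) := by
    rw [← hdouble]
    calc ((w : ℝ) - 1 + p * η) * #B ≤ d * p * #B := by gcongr
      _ = ∑ x ∈ T, d * #B := by rw [sum_const, hT.card_eq, nsmul_eq_mul]; ring
      _ ≤ _ := sum_le_sum hdeg
  by_cases hex : ∃ S ⊆ T, #S = w ∧ a < (#{y ∈ B | ∀ x ∈ S, G.Adj x y} : ℝ)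
  · obtain ⟨S, hST, hSw, hS⟩ := hex
    obtain ⟨U, hUB, hU⟩ := hG _ hS
    have hadj : ∀ x ∈ S, ∀ y ∈ U, G.Adj x y := fun x hx y hy => (mem_filter.1 (hUB hy)).2 x hx
    refine ⟨S ∪ U, union_subset_union (hST.trans hTA') (hUB.trans (filter_subset _ _)), ?_, ?_⟩
    · intro x hx y hy hxy
      simp only [coe_union, Set.mem_union, mem_coe] at hx hy
      rcases hx with hx | hx <;> rcases hy with hy | hy
      · exact hT.isClique (hST hx) (hST hy) hxy
      · exact hadj x hx y hy
      · exact (hadj y hy x hx).symm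
      · exact hU.isClique hx hy hxy
    · rw [card_union_of_disjoint, hSw, hU.card_eq, add_comm]
      rw [disjoint_left]
      intro x hx hx'
      exact (hadj x hx x hx').ne rfl
  · push Not at hex
    exfalso
    -- The vertices of `B` with at least `w` neighbours in `T` are covered by the common
    -- neighbourhoods of the `w`-subsets of `T`, all of which are small.
    set Bg := {y ∈ B | w ≤ #{x ∈ T | G.Adj x y}} with hBg
    have hcover : Bg ⊆ (T.powersetCard w).biUnion fun S => {y ∈ B | ∀ x ∈ S, G.Adj x y} := by
      intro y hy
      obtain ⟨hyB, hy⟩ := mem_filter.1 hy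
      obtain ⟨S, hS, hSw⟩ := exists_subset_card_eq hy
      refine mem_biUnion.2 ⟨S, mem_powersetCard.2 ⟨hS.trans (filter_subset _ _), hSw⟩, ?_⟩
      exact mem_filter.2 ⟨hyB, fun x hx => (mem_filter.1 (hS hx)).2⟩
    have hcard : (#Bg : ℝ) ≤ 2 ^ p * a := by
      calc (#Bg : ℝ) ≤ ∑ S ∈ T.powersetCard w, (#{y ∈ B | ∀ x ∈ S, G.Adj x y} : ℝ) := by
            exact_mod_cast (card_le_card hcover).trans card_biUnion_le
        _ ≤ ∑ S ∈ T.powersetCard w, a := sum_le_sum fun S hS =>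
            hex S (mem_powersetCard.1 hS).1 (mem_powersetCard.1 hS).2
        _ = (#(T.powersetCard w) : ℝ) * a := by rw [sum_const, nsmul_eq_mul]
        _ ≤ 2 ^ p * a := by
            gcongr
            rw [card_powersetCard, hT.card_eq]
            exact_mod_cast Nat.choose_le_two_pow p w
    have hup : ∑ y ∈ B, (#{x ∈ T | G.Adj x y} : ℝ) ≤ (w - 1) * #B + p * #Bg := by
      calc ∑ y ∈ B, (#{x ∈ T | G.Adj x y} : ℝ)
          ≤ ∑ y ∈ B, ((w - 1 : ℝ) + if w ≤ #{x ∈ T | G.Adj x y} then (p : ℝ) else 0) := by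
            refine sum_le_sum fun y _ => ?_
            split_ifs with hy
            · have h1 : #{x ∈ T | G.Adj x y} ≤ p := (card_filter_le _ _).trans hT.card_eq.le
              have h2 : (#{x ∈ T | G.Adj x y} : ℝ) ≤ p := by exact_mod_cast h1
              have h3 : (1 : ℝ) ≤ w := by exact_mod_cast hw
              linarith
            · have h1 : #{x ∈ T | G.Adj x y} + 1 ≤ w := by omega
              have h2 : (#{x ∈ T | G.Adj x y} : ℝ) + 1 ≤ w := by exact_mod_cast h1
              linarith
        _ = (w - 1) * #B + p * #Bg := by
            rw [sum_add_distrib, sum_const, nsmul_eq_mul, ← sum_filter, sum_const, nsmul_eq_mul]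
            ring
    have hp' : (0 : ℝ) < p := by exact_mod_cast hp
    have h1 : p * (η * #B) ≤ p * (#Bg : ℝ) := by linarith
    have h2 : η * #B ≤ (#Bg : ℝ) := le_of_mul_le_mul_left h1 hp'
    have h3 : η * M ≤ η * #B := by gcongr
    linarith

/-- Greedy embedding: one vertex is chosen from each `X i`, each time shrinking the remaining sets
to the neighbourhood of the chosen vertex, and a `K_{p+w}` is found in what is left of
the dense pair `(A, B)`. -/
theorem exists_clique_of_family {V ι : Type} [Fintype V] {G : SimpleGraph V} {p w : ℕ}
    {a m M η d : ℝ} (hm : 0 < m) (ham : a < m)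
    (ha0 : 0 ≤ a) (ha : 2 ^ p * a < η * M) (hp : 0 < p) (hη : 0 < η) (hη1 : η ≤ 1) (hw : 1 ≤ w)
    (hd : (w : ℝ) - 1 + p * η ≤ d * p)
    (hG : ∀ s : Finset V, a < (#s : ℝ) → ∃ t ⊆ s, G.IsNClique p t)
    (I : Finset ι) : ∀ (X : ι → Finset V) (A B : Finset V) (L : ℝ),
    (#I + 2) * m ≤ M → M ≤ η ^ #I * L → (∀ i ∈ I, L ≤ (#(X i) : ℝ)) →
    L ≤ (#A : ℝ) → L ≤ (#B : ℝ) →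
    (∀ i ∈ I, ∀ j ∈ I, i ≠ j → HasLowerDensity G m η (X i) (X j)) →
    (∀ i ∈ I, HasLowerDensity G m η (X i) A) → (∀ i ∈ I, HasLowerDensity G m η (X i) B) →
    HasLowerDensity G m d A B →
    ∃ s ⊆ A ∪ B ∪ I.biUnion X, G.IsNClique (p + w + #I) s := by
  induction I using Finset.induction_on with
  | empty =>
    intro X A B L hM hL _ hA hB _ _ _ hAB
    simp only [card_empty, pow_zero, one_mul] at hL
    simp only [card_empty, Nat.cast_zero, zero_add] at hM
    simpa using exists_clique_in_pair hm ham hM ha0 ha hp hη hw hd hG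
      (hL.trans hA) (hL.trans hB) hAB
  | insert i I hi ih =>
    intro X A B L hM hL hX hA hB hXX hXA hXB hAB
    rw [card_insert_of_notMem hi] at hM hL
    push_cast at hM
    have hM0 : 0 < M := lt_of_lt_of_le (by positivity) hM
    have hL0 : 0 < L := pos_of_mul_pos_right (hM0.trans_le hL) (by positivity)
    have hML : M ≤ L := hL.trans (mul_le_of_le_one_left hL0.le (pow_le_one₀ hη.le hη1))
    have hmL : m ≤ L := by
      have : (0 : ℝ) ≤ #I * m := by positivity
      linarith
    set bad : Finset V → Finset V := fun Y => {x ∈ X i | (#{y ∈ Y | G.Adj x y} : ℝ) < η * #Y}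
      with hbad
    have hii := mem_insert_self i I
    have hbA : (#(bad A) : ℝ) < m := (hXA i hii).card_atypical_lt hm (hmL.trans hA)
    have hbB : (#(bad B) : ℝ) < m := (hXB i hii).card_atypical_lt hm (hmL.trans hB)
    have hbX : ∀ j ∈ I, (#(bad (X j)) : ℝ) ≤ m := fun j hj =>
      ((hXX i hii j (mem_insert_of_mem hj) (by rintro rfl; exact hi hj)).card_atypical_lt hm
        (hmL.trans (hX j (mem_insert_of_mem hj)))).le
    have hbU : (#(I.biUnion fun j => bad (X j)) : ℝ) ≤ #I * m := by
      calc (#(I.biUnion fun j => bad (X j)) : ℝ) ≤ ∑ j ∈ I, (#(bad (X j)) : ℝ) := by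
            exact_mod_cast card_biUnion_le
        _ ≤ ∑ j ∈ I, m := sum_le_sum hbX
        _ = #I * m := by rw [sum_const, nsmul_eq_mul]
    have hlt : #(bad A ∪ bad B ∪ I.biUnion fun j => bad (X j)) < #(X i) := by
      have h1 : (#(bad A ∪ bad B ∪ I.biUnion fun j => bad (X j)) : ℝ)
          ≤ #(bad A) + #(bad B) + #(I.biUnion fun j => bad (X j)) := by
        exact_mod_cast (card_union_le _ _).trans (Nat.add_le_add_right (card_union_le _ _) _)
      have h2 := hX i hii
      have : (#(bad A ∪ bad B ∪ I.biUnion fun j => bad (X j)) : ℝ) < #(X i) := by linarith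
      exact_mod_cast this
    obtain ⟨v, hv, hvb⟩ := exists_mem_notMem_of_card_lt_card hlt
    simp only [mem_union, mem_biUnion, not_or, not_exists, not_and] at hvb
    have htyp : ∀ Y, v ∉ bad Y → L ≤ (#Y : ℝ) → η * L ≤ (#{y ∈ Y | G.Adj v y} : ℝ) := by
      intro Y hY hLY
      have : η * #Y ≤ (#{y ∈ Y | G.Adj v y} : ℝ) := by
        by_contra! hc
        exact hY (mem_filter.2 ⟨hv, hc⟩)
      exact le_trans (by gcongr) this
    obtain ⟨s, hs, hcl⟩ := ih (fun j => {y ∈ X j | G.Adj v y}) {y ∈ A | G.Adj v y}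
      {y ∈ B | G.Adj v y} (η * L) (by linarith) (by rw [pow_succ] at hL; linarith)
      (fun j hj => htyp _ (hvb.2 j hj) (hX j (mem_insert_of_mem hj)))
      (htyp _ hvb.1.1 hA) (htyp _ hvb.1.2 hB)
      (fun j hj k hk hjk => (hXX j (mem_insert_of_mem hj) k (mem_insert_of_mem hk) hjk).subset
        (filter_subset _ _) (filter_subset _ _))
      (fun j hj => (hXA j (mem_insert_of_mem hj)).subset (filter_subset _ _) (filter_subset _ _))
      (fun j hj => (hXB j (mem_insert_of_mem hj)).subset (filter_subset _ _) (filter_subset _ _))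
      (hAB.subset (filter_subset _ _) (filter_subset _ _))
    refine ⟨insert v s, ?_, ?_⟩
    · intro x hx
      rcases mem_insert.1 hx with rfl | hx
      · exact mem_union_right _ (mem_biUnion.2 ⟨i, hii, hv⟩)
      · have := hs hx
        simp only [mem_union, mem_biUnion, mem_filter] at this ⊢
        rcases this with (h | h) | ⟨j, hj, h⟩
        · exact Or.inl (Or.inl h.1)
        · exact Or.inl (Or.inr h.1)
        · exact Or.inr ⟨j, mem_insert_of_mem hj, h.1⟩
    · rw [card_insert_of_notMem hi, ← add_assoc]
      refine hcl.insert fun y hy => ?_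
      have := hs hy
      simp only [mem_union, mem_biUnion, mem_filter] at this
      rcases this with (h | h) | ⟨j, hj, h⟩
      · exact h.2
      · exact h.2
      · exact h.2

/-! ### A weighted Turán bound -/

/-- The quadratic form `∑ x_i x_j W_{ij}` with indices restricted to `S`. -/
noncomputable def quadForm {ι : Type} (W : ι → ι → ℝ) (x : ι → ℝ) (S : Finset ι) : ℝ :=
  ∑ i ∈ S, ∑ j ∈ S, x i * x j * W i j

theorem quadForm_insert {ι : Type} {W : ι → ι → ℝ} (hsym : ∀ i j, W i j = W j i)
    (hdiag : ∀ i, W i i = 0) (x : ι → ℝ) {S : Finset ι} {a : ι} (ha : a ∉ S) :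
    quadForm W x (insert a S) = quadForm W x S + 2 * x a * ∑ j ∈ S, x j * W a j := by
  unfold quadForm
  simp only [sum_insert ha, sum_add_distrib, hdiag]
  have h1 : ∑ i ∈ S, x i * x a * W i a = x a * ∑ j ∈ S, x j * W a j := by
    rw [mul_sum]; exact sum_congr rfl fun i _ => by rw [hsym i a]; ring
  have h2 : ∑ i ∈ S, x a * x i * W a i = x a * ∑ j ∈ S, x j * W a j := by
    rw [mul_sum]; exact sum_congr rfl fun i _ => by ring
  rw [h1, h2]; ring

theorem quadForm_congr {ι : Type} {W : ι → ι → ℝ} {x y : ι → ℝ} {S : Finset ι}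
    (h : ∀ i ∈ S, x i = y i) : quadForm W x S = quadForm W y S :=
  sum_congr rfl fun i hi => sum_congr rfl fun j hj => by rw [h i hi, h j hj]

/-- Motzkin–Straus symmetrization: along the direction `e_j - e_i` with `W i j = 0` the form is
affine, so all the weight of one of the two indices can be moved to the other without decreasing
the form; repeating this, the support becomes a clique of the graph `W i j ≠ 0`. -/
theorem exists_clique_support {ι : Type} {W : ι → ι → ℝ} (hsym : ∀ i j, W i j = W j i)
    (hdiag : ∀ i, W i i = 0) (S : Finset ι) : ∀ x : ι → ℝ, (∀ i, 0 ≤ x i) →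
    ∃ T ⊆ S, ∃ y : ι → ℝ, (∀ i, 0 ≤ y i) ∧ ∑ i ∈ T, y i = ∑ i ∈ S, x i ∧
      quadForm W x S ≤ quadForm W y T ∧ ∀ i ∈ T, ∀ j ∈ T, i ≠ j → W i j ≠ 0 := by
  induction S using Finset.strongInduction with
  | H S ih =>
    intro x hx
    by_cases hcl : ∀ i ∈ S, ∀ j ∈ S, i ≠ j → W i j ≠ 0
    · exact ⟨S, subset_rfl, x, hx, rfl, le_rfl, hcl⟩
    push Not at hcl
    obtain ⟨i₀, hi₀, j₀, hj₀, hne₀, hW₀⟩ := hcl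
    obtain ⟨i, hi, j, hj, hne, hW, hle⟩ : ∃ i ∈ S, ∃ j ∈ S, ∃ _ : i ≠ j, W i j = 0 ∧
        ∑ k ∈ (S.erase i).erase j, x k * W i k ≤ ∑ k ∈ (S.erase i).erase j, x k * W j k := by
      rcases le_total (∑ k ∈ (S.erase i₀).erase j₀, x k * W i₀ k)
        (∑ k ∈ (S.erase i₀).erase j₀, x k * W j₀ k) with h | h
      · exact ⟨i₀, hi₀, j₀, hj₀, hne₀, hW₀, h⟩
      · rw [erase_right_comm] at h
        exact ⟨j₀, hj₀, i₀, hi₀, hne₀.symm, by rw [hsym, hW₀], h⟩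
    set U := (S.erase i).erase j with hU
    have hjS : j ∈ S.erase i := mem_erase.2 ⟨hne.symm, hj⟩
    have hjU : j ∉ U := notMem_erase _ _
    have hSi : S.erase i = insert j U := (insert_erase hjS).symm
    have hS : S = insert i (insert j U) := by rw [← hSi, insert_erase hi]
    have hiU : i ∉ insert j U := by rw [← hSi]; exact notMem_erase _ _
    set x' : ι → ℝ := Function.update x j (x i + x j) with hx'
    have hx'j : x' j = x i + x j := by simp [hx']
    have hx'U : ∀ k ∈ U, x' k = x k := fun k hk => by
      have : k ≠ j := by rintro rfl; exact hjU hk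
      simp [hx', this]
    obtain ⟨T, hT, y, hy, hsum, hq, hTc⟩ := ih (S.erase i) (erase_ssubset hi) x' (fun k => by
      by_cases hk : k = j
      · subst hk; rw [hx'j]; exact add_nonneg (hx _) (hx _)
      · simp [hx', hk, hx])
    refine ⟨T, hT.trans (erase_subset _ _), y, hy, ?_, le_trans ?_ hq, hTc⟩
    · rw [hsum, hSi, hS, sum_insert hiU, sum_insert hjU, sum_insert hjU, hx'j,
        sum_congr rfl hx'U]
      ring
    · rw [hSi, hS, quadForm_insert hsym hdiag _ hiU, quadForm_insert hsym hdiag _ hjU,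
        quadForm_insert hsym hdiag _ hjU, sum_insert hjU, hW, quadForm_congr hx'U, hx'j,
        show ∑ k ∈ U, x' k * W j k = ∑ k ∈ U, x k * W j k from
          sum_congr rfl fun k hk => by rw [hx'U k hk]]
      have := mul_le_mul_of_nonneg_left hle (hx i)
      linarith

theorem quadForm_le_of_clique {ι : Type} {W : ι → ι → ℝ} (hdiag : ∀ i, W i i = 0) {c : ℝ}
    {x : ι → ℝ} (hx : ∀ i, 0 ≤ x i) {T : Finset ι} (hc : 0 ≤ c)
    (hW : ∀ i ∈ T, ∀ j ∈ T, i ≠ j → W i j ≤ c) (hsum : ∑ i ∈ T, x i = 1) :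
    quadForm W x T ≤ c * (1 - 1 / #T) := by
  have hT : T.Nonempty := by
    rw [nonempty_iff_ne_empty]; rintro rfl; simp at hsum
  have hT0 : (0 : ℝ) < #T := by exact_mod_cast hT.card_pos
  have hcs := sq_sum_le_card_mul_sum_sq (s := T) (f := x)
  rw [hsum, one_pow] at hcs
  have hsq : 1 / (#T : ℝ) ≤ ∑ i ∈ T, x i ^ 2 := by
    rw [div_le_iff₀ hT0]; linarith
  calc quadForm W x T ≤ ∑ i ∈ T, ∑ j ∈ T, (c * (x i * x j) - if i = j then c * x i ^ 2 else 0) := by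
        refine sum_le_sum fun i hi => sum_le_sum fun j hj => ?_
        split_ifs with hij
        · subst hij; rw [hdiag]; apply le_of_eq; ring
        · have := mul_le_mul_of_nonneg_left (hW i hi j hj hij) (mul_nonneg (hx i) (hx j))
          linarith
    _ = c * ((∑ i ∈ T, x i) * ∑ j ∈ T, x j) - c * ∑ i ∈ T, x i ^ 2 := by
        simp only [sum_sub_distrib, sum_ite_eq]
        rw [sum_mul_sum, mul_sum, mul_sum]
        congr 1
        · exact sum_congr rfl fun i _ => by rw [mul_sum]
        · exact sum_congr rfl fun i hi => by rw [if_pos hi]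
    _ = c * (1 - ∑ i ∈ T, x i ^ 2) := by rw [hsum]; ring
    _ ≤ c * (1 - 1 / #T) := by gcongr

/-- If every `t`-clique of positive entries has all entries at most `(7 - t) / p` up to `2η`,
then the form is at most `max_t (1 - 1/t) (7 - t) / p = 8 / (3p)`, attained at `t = 3`,
up to `2η`. -/
theorem quadForm_le {ι : Type} {W : ι → ι → ℝ} (hsym : ∀ i j, W i j = W j i)
    (hdiag : ∀ i, W i i = 0) {p η : ℝ} (hp : 0 < p) (hη : 0 < η)
    (hpos : ∀ i j, W i j ≠ 0 → 2 * η ≤ W i j) {S : Finset ι} {x : ι → ℝ} (hx : ∀ i, 0 ≤ x i)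
    (hsum : ∑ i ∈ S, x i = 1)
    (hcl : ∀ T ⊆ S, 2 ≤ #T → #T ≤ 7 → (∀ i ∈ T, ∀ j ∈ T, i ≠ j → W i j ≠ 0) →
      ∀ i ∈ T, ∀ j ∈ T, i ≠ j → W i j < (7 - #T) / p + 2 * η) :
    quadForm W x S ≤ 8 / (3 * p) + 2 * η := by
  obtain ⟨T, hTS, y, hy, hysum, hq, hT⟩ := exists_clique_support hsym hdiag S x hx
  rw [hsum] at hysum
  refine hq.trans ?_
  have hTne : T.Nonempty := by
    rw [nonempty_iff_ne_empty]; rintro rfl; simp at hysum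
  have hT6 : #T ≤ 6 := by
    by_contra! h7
    obtain ⟨R, hRT, hR⟩ := exists_subset_card_eq (show 7 ≤ #T by omega)
    have hRc : ∀ i ∈ R, ∀ j ∈ R, i ≠ j → W i j ≠ 0 := fun i hi j hj => hT i (hRT hi) j (hRT hj)
    obtain ⟨i, hi, j, hj, hij⟩ := one_lt_card.1 (show 1 < #R by omega)
    have h1 := hcl R (hRT.trans hTS) (by omega) (by omega) hRc i hi j hj hij
    have h2 := hpos i j (hRc i hi j hj hij)
    rw [hR] at h1
    norm_num at h1
    linarith
  have hT1 := hTne.card_pos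
  have hT6' : (#T : ℝ) ≤ 6 := by exact_mod_cast hT6
  have hc : 0 ≤ (7 - #T) / p + 2 * η := by
    have : 0 ≤ (7 - #T) / p := div_nonneg (by linarith) hp.le
    linarith
  refine (quadForm_le_of_clique hdiag hy hc (fun i hi j hj hij => ?_) hysum).trans ?_
  · have : 1 < #T := one_lt_card.2 ⟨i, hi, j, hj, hij⟩
    exact (hcl T hTS (by omega) (by omega) hT i hi j hj hij).le
  · have h8 : 8 / (3 * p) = (8 / 3) * p⁻¹ := by field_simp
    have hp' : 0 < p⁻¹ := inv_pos.2 hp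
    rw [h8, div_eq_mul_inv]
    generalize p⁻¹ = r at *
    interval_cases #T <;> norm_num <;> nlinarith

/-! ### The weighted reduced graph -/

/-- The weighted reduced graph: the density of a pair of distinct `ε`-uniform clusters when this
density is at least `2η`, and `0` for all other pairs. -/
noncomputable def reducedWeight {V : Type} [Fintype V] (G : SimpleGraph V) (ε η : ℝ)
    (U W : Finset V) : ℝ :=
  if U ≠ W ∧ G.IsUniform ε U W ∧ 2 * η ≤ (G.edgeDensity U W : ℝ) then (G.edgeDensity U W : ℝ) else 0

theorem reducedWeight_of_ne_zero {V : Type} [Fintype V] {G : SimpleGraph V} {ε η : ℝ}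
    {U W : Finset V} (h : reducedWeight G ε η U W ≠ 0) :
    G.IsUniform ε U W ∧ 2 * η ≤ reducedWeight G ε η U W ∧
      reducedWeight G ε η U W = (G.edgeDensity U W : ℝ) := by
  unfold reducedWeight at h ⊢
  split_ifs at h ⊢ with h1
  · exact ⟨h1.2.1, h1.2.2, rfl⟩
  · exact absurd rfl h

theorem reducedWeight_comm {V : Type} [Fintype V] (G : SimpleGraph V) (ε η : ℝ)
    (U W : Finset V) : reducedWeight G ε η U W = reducedWeight G ε η W U := by
  unfold reducedWeight
  rw [G.edgeDensity_comm U W]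
  exact if_congr (and_congr ne_comm (and_congr_left' (SimpleGraph.isUniform_comm G))) rfl rfl

theorem SimpleGraph.IsUniform.hasLowerDensity {V : Type} [Fintype V] {G : SimpleGraph V}
    {ε m d : ℝ} {X Y : Finset V} (h : G.IsUniform ε X Y) (hX : (#X : ℝ) * ε ≤ m)
    (hY : (#Y : ℝ) * ε ≤ m) (hd : d + ε ≤ (G.edgeDensity X Y : ℝ)) :
    HasLowerDensity G m d X Y := by
  intro X' hX' Y' hY' hm hm'
  have := abs_lt.1 (h hX' hY' (hX.trans hm) (hY.trans hm'))
  linarith [this.1]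

/-- In a `K_{p+6}`-free graph, a `t`-clique of the reduced graph has all its densities below
`(7 - t) / p + 2η`: a denser pair would give a `K_{p + (8 - t)}`, and the other `t - 2` clusters
one further vertex each. -/
theorem reducedWeight_lt {V : Type} [Fintype V] {G : SimpleGraph V} {p : ℕ}
    {a L ε η : ℝ} (hp : 0 < p) (hη : 0 < η) (hη1 : η ≤ 1) (hε : 0 < ε) (hεη : 28 * ε ≤ η ^ 5)
    (hL : 0 < L) (ha0 : 0 ≤ a) (ha : 2 ^ p * a ≤ 2 * η * ε * L)
    (hG : ∀ s : Finset V, a < (#s : ℝ) → ∃ t ⊆ s, G.IsNClique p t)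
    (hfree : G.CliqueFree (p + 6)) {T : Finset (Finset V)}
    (hlow : ∀ U ∈ T, L ≤ (#U : ℝ)) (hupp : ∀ U ∈ T, (#U : ℝ) ≤ 4 * L)
    (h2 : 2 ≤ #T) (h7 : #T ≤ 7)
    (hT : ∀ U ∈ T, ∀ W ∈ T, U ≠ W → reducedWeight G ε η U W ≠ 0)
    {A B : Finset V} (hA : A ∈ T) (hB : B ∈ T) (hAB : A ≠ B) :
    reducedWeight G ε η A B < (7 - #T) / p + 2 * η := by
  by_contra! hcon
  have hp' : (0 : ℝ) < p := by exact_mod_cast hp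
  have hη5 : η ^ 5 ≤ η := pow_le_of_le_one hη.le hη1 (by norm_num)
  have hεη' : ε ≤ η := by linarith
  set m := 4 * ε * L with hm
  have hm0 : 0 < m := by positivity
  have hsize : ∀ U ∈ T, (#U : ℝ) * ε ≤ m := fun U hU => by
    have := mul_le_mul_of_nonneg_right (hupp U hU) hε.le
    linarith
  have hpair : ∀ U ∈ T, ∀ W ∈ T, U ≠ W → HasLowerDensity G m η U W := fun U hU W hW hUW => by
    obtain ⟨h1, h2, h3⟩ := reducedWeight_of_ne_zero (hT U hU W hW hUW)
    exact h1.hasLowerDensity (hsize U hU) (hsize W hW) (by linarith)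
  obtain ⟨hu, -, hd⟩ := reducedWeight_of_ne_zero (hT A hA B hB hAB)
  have hABd : HasLowerDensity G m ((7 - #T) / p + η) A B :=
    hu.hasLowerDensity (hsize A hA) (hsize B hB) (by linarith)
  set I := (T.erase A).erase B with hI
  have hBA : B ∈ T.erase A := mem_erase.2 ⟨hAB.symm, hB⟩
  have hcard : #I + 2 = #T := by
    rw [hI, card_erase_of_mem hBA, card_erase_of_mem hA]; omega
  have hIT : ∀ U ∈ I, U ∈ T ∧ U ≠ A ∧ U ≠ B := fun U hU => by
    rw [hI, mem_erase, mem_erase] at hU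
    exact ⟨hU.2.2, hU.2.1, hU.1⟩
  have ham : a < m := by
    have h1 : 1 * a ≤ 2 ^ p * a :=
      mul_le_mul_of_nonneg_right (one_le_pow₀ (by norm_num)) ha0
    have h2 : η * (ε * L) ≤ 1 * (ε * L) := by gcongr
    have h3 : 0 < ε * L := by positivity
    linarith
  have hcard' : (#I : ℝ) + 2 = #T := by exact_mod_cast hcard
  have h7' : (#T : ℝ) ≤ 7 := by exact_mod_cast h7
  obtain ⟨s, -, hs⟩ := exists_clique_of_family (w := 8 - #T) (M := 7 * m) (η := η) (ι := Finset V)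
    (d := (7 - #T) / p + η) hm0 ham ha0
    (by
      have : 0 < η * ε * L := by positivity
      rw [hm]; linarith) hp hη hη1 (by omega)
    (by
      rw [Nat.cast_sub (by omega)]
      push_cast
      field_simp
      linarith) hG I id A B L
    (by rw [hcard']; gcongr)
    (by
      have h1 : η ^ 5 ≤ η ^ #I := pow_le_pow_of_le_one hη.le hη1 (by omega)
      have h2 : 28 * ε * L ≤ η ^ #I * L := by gcongr; linarith
      rw [hm]; linarith)
    (fun U hU => hlow U (hIT U hU).1) (hlow A hA) (hlow B hB)
    (fun U hU W hW => hpair U (hIT U hU).1 W (hIT W hW).1)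
    (fun U hU => hpair U (hIT U hU).1 A hA (hIT U hU).2.1)
    (fun U hU => hpair U (hIT U hU).1 B hB (hIT U hU).2.2) hABd
  refine hfree s ?_
  convert hs using 1
  omega

theorem exists_clique_of_alphaP_lt {V : Type} [Fintype V] {G : SimpleGraph V} {p : ℕ}
    {s : Finset V} (h : alphaP p G < #s) : ∃ t ⊆ s, G.IsNClique p t := by
  by_contra! hc
  refine absurd h (not_lt.2 (le_csSup ⟨Fintype.card V, ?_⟩ ⟨s, rfl, hc⟩))
  rintro k ⟨t, rfl, -⟩
  exact card_le_univ t

/-- Passing to the reduced graph loses only the edges inside clusters, in irregular pairs and in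
sparse pairs. -/
theorem two_mul_edgeCount_le {V : Type} [Fintype V] [DecidableEq V] [Nonempty V] {G : SimpleGraph V} {ε η : ℝ}
    (hε : 0 < ε) (hη : 0 < η) (P : Finpartition (univ : Finset V)) (hP : P.IsEquipartition)
    (hU : P.IsUniform G ε) {D : ℝ} (hD : ∀ U ∈ P.parts, (#U : ℝ) ≤ D) :
    2 * (edgeCount G : ℝ) ≤
      (quadForm (reducedWeight G ε η) (fun U => (#U : ℝ) / Fintype.card V) P.parts
        + 2 * η + 4 * ε) * Fintype.card V ^ 2 + D * Fintype.card V := by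
  set N : ℝ := (Fintype.card V : ℝ) with hN
  have hN0 : N ≠ 0 := by rw [hN]; exact_mod_cast Fintype.card_ne_zero
  have hsum : ∑ U ∈ P.parts, (#U : ℝ) = N := by
    rw [hN, ← Finset.card_univ]; exact_mod_cast P.sum_card_parts
  have hcount : 2 * (edgeCount G : ℝ) =
      ∑ U ∈ P.parts, ∑ W ∈ P.parts, (#(G.interedges U W) : ℝ) := by
    have h1 : #(G.interedges univ univ) = ∑ ab ∈ P.parts ×ˢ P.parts, #(G.interedges ab.1 ab.2) :=
      Rel.card_interedges_finpartition G.Adj P P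
    have h2 : 2 * edgeCount G = _ := (two_mul_edgeCount G).trans h1
    rw [sum_product] at h2
    exact_mod_cast h2
  have hpt : ∀ U ∈ P.parts, ∀ W ∈ P.parts, (#(G.interedges U W) : ℝ) ≤
      N ^ 2 * ((#U : ℝ) / N * ((#W : ℝ) / N) * reducedWeight G ε η U W) + 2 * η * (#U * #W)
        + (if U = W then (#U : ℝ) * #W else 0)
        + (if (U, W) ∈ P.nonUniforms G ε then (#U : ℝ) * #W else 0) := by
    intro U hU W hW
    have hle : (#(G.interedges U W) : ℝ) ≤ #U * #W := by
      exact_mod_cast G.card_interedges_le_mul U W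
    have hdens := card_interedges_eq_density G U W
    have h0 : (0 : ℝ) ≤ (#U : ℝ) * #W := by positivity
    have hw : N ^ 2 * ((#U : ℝ) / N * ((#W : ℝ) / N) * reducedWeight G ε η U W) =
        reducedWeight G ε η U W * (#U * #W) := by field_simp
    have hw0 : 0 ≤ reducedWeight G ε η U W * (#U * #W) := by
      refine mul_nonneg ?_ h0
      unfold reducedWeight
      split_ifs
      · exact_mod_cast G.edgeDensity_nonneg U W
      · exact le_rfl
    have h2 : 0 ≤ 2 * η * ((#U : ℝ) * #W) := by positivity
    rw [hw]
    by_cases hUW : U = W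
    · rw [if_pos hUW]
      split_ifs <;> linarith
    by_cases hun : G.IsUniform ε U W
    · by_cases hd : 2 * η ≤ (G.edgeDensity U W : ℝ)
      · have : reducedWeight G ε η U W = (G.edgeDensity U W : ℝ) := if_pos ⟨hUW, hun, hd⟩
        rw [if_neg hUW, this]
        split_ifs <;> linarith
      · have : (G.edgeDensity U W : ℝ) * (#U * #W) ≤ 2 * η * (#U * #W) := by
          gcongr; linarith
        rw [if_neg hUW]
        split_ifs <;> linarith
    · have : (U, W) ∈ P.nonUniforms G ε := (P.mk_mem_nonUniforms G).2 ⟨hU, hW, hUW, hun⟩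
      rw [if_neg hUW, if_pos this]
      linarith
  have hnon : ∑ U ∈ P.parts, ∑ W ∈ P.parts,
      (if (U, W) ∈ P.nonUniforms G ε then (#U : ℝ) * #W else 0) ≤ 4 * ε * N ^ 2 := by
    rw [← sum_product' (f := fun U W => if (U, W) ∈ P.nonUniforms G ε then (#U : ℝ) * #W else 0),
      ← sum_filter]
    have hf : (P.parts ×ˢ P.parts).filter (fun x => (x.1, x.2) ∈ P.nonUniforms G ε) =
        P.nonUniforms G ε := by
      ext ⟨U, W⟩
      simp only [mem_filter, mem_product, P.mk_mem_nonUniforms]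
      tauto
    rw [hf]
    refine (hP.sum_nonUniforms_lt' univ_nonempty hε hU).le.trans ?_
    have h1 : (#P.parts : ℝ) ≤ N := by
      rw [hN, ← Finset.card_univ]; exact_mod_cast P.card_parts_le_card
    rw [Finset.card_univ, ← hN]
    calc ε * (N + #P.parts) ^ 2 ≤ ε * (N + N) ^ 2 := by gcongr
      _ = 4 * ε * N ^ 2 := by ring
  have hdiag : ∑ U ∈ P.parts, ∑ W ∈ P.parts, (if U = W then (#U : ℝ) * #W else 0) ≤ D * N := by
    rw [← hsum, mul_sum]
    refine sum_le_sum fun U hU => ?_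
    rw [sum_ite_eq, if_pos hU]
    exact mul_le_mul_of_nonneg_right (hD U hU) (by positivity)
  have hmain : ∑ U ∈ P.parts, ∑ W ∈ P.parts, (2 * η * ((#U : ℝ) * #W)) = 2 * η * N ^ 2 := by
    simp only [← mul_sum, ← sum_mul, hsum]; ring
  rw [hcount]
  refine (sum_le_sum fun U hU => sum_le_sum fun W hW => hpt U hU W hW).trans ?_
  simp only [sum_add_distrib]
  rw [hmain]
  have hq : ∑ U ∈ P.parts, ∑ W ∈ P.parts,
      N ^ 2 * ((#U : ℝ) / N * ((#W : ℝ) / N) * reducedWeight G ε η U W) =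
      N ^ 2 * quadForm (reducedWeight G ε η) (fun U => (#U : ℝ) / N) P.parts := by
    unfold quadForm
    simp only [mul_sum]
  rw [hq]
  linarith

/-! ### The Ramsey–Turán bound -/

set_option maxHeartbeats 400000 in
/-- Ramsey–Turán upper bound: `ρ_p(p+6) ≤ 8/(3p)` for every `p ≥ 6`. -/
theorem rt_bound_p_plus_six (p : ℕ) (hp : 6 ≤ p) (δ : ℝ) (hδ : 0 < δ) :
    ∃ (ε : ℝ) (n₀ : ℕ), 0 < ε ∧
      ∀ (n : ℕ) (G : SimpleGraph (Fin n)), n₀ ≤ n → G.CliqueFree (p + 6) →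
        (alphaP p G : ℝ) ≤ ε * (n : ℝ) →
        (edgeCount G : ℝ) ≤ (8 / (3 * (p : ℝ)) + δ) * (n.choose 2 : ℝ) := by
  have hp0 : 0 < p := by omega
  have hp' : (0 : ℝ) < p := by exact_mod_cast hp0
  set c : ℝ := 8 / (3 * (p : ℝ)) with hc
  have hc0 : 0 < c := by positivity
  set η : ℝ := min δ 1 / 20 with hη
  have hη0 : 0 < η := by positivity
  have hηδ : η ≤ δ / 20 := by rw [hη]; gcongr; exact min_le_left _ _
  have hη1 : η ≤ 1 := by
    have : min δ 1 ≤ 1 := min_le_right _ _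
    linarith
  -- `η ^ 5`: a cluster shrinks by the factor `η` at most five times. `28 = 7 * 4`: at most seven
  -- clusters are involved, with sizes within a factor `4` of each other.
  set e : ℝ := η ^ 5 / 28 with he
  have he0 : 0 < e := by positivity
  obtain ⟨l, hl⟩ : ∃ l : ℕ, l = ⌈2 / η⌉₊ := ⟨_, rfl⟩
  have hl0 : 0 < l := hl ▸ Nat.ceil_pos.2 (by positivity)
  obtain ⟨K, hK⟩ : ∃ K, K = SzemerediRegularity.bound e l := ⟨_, rfl⟩
  have hK0 : 0 < K := hK ▸ SzemerediRegularity.bound_pos e l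
  have hKr : (0 : ℝ) < K := by exact_mod_cast hK0
  refine ⟨η * e / (2 ^ p * K), max (max l K) ⌈2 * (c + δ) / δ⌉₊, by positivity, ?_⟩
  intro n G hn hfree hα
  have hln : l ≤ n := le_trans (by simp) hn
  have hKn : K ≤ n := le_trans (by simp) hn
  have hnδ : 2 * (c + δ) / δ ≤ n := (Nat.le_ceil _).trans (by
    exact_mod_cast (le_max_right _ _).trans hn)
  have hn0 : 0 < n := hK0.trans_le hKn
  have hnr : (0 : ℝ) < n := by exact_mod_cast hn0
  have : Nonempty (Fin n) := ⟨⟨0, hn0⟩⟩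
  obtain ⟨P, hPe, hPl, hPK, hPu⟩ := szemeredi_regularity G he0 (l := l) (by simpa using hln)
  rw [← hK] at hPK
  set k := #P.parts with hk
  have hk0 : 0 < k := hl0.trans_le hPl
  have hkr : (0 : ℝ) < k := by exact_mod_cast hk0
  have hkn : k ≤ n := hPK.trans hKn
  have hkK : (k : ℝ) ≤ K := by exact_mod_cast hPK
  have hdiv1 : 1 ≤ n / k := (Nat.one_le_div_iff hk0).2 hkn
  have hmod : n < k * (n / k + 1) := Nat.lt_mul_div_succ n hk0
  have hmod2 : k * (n / k) ≤ n := Nat.mul_div_le n k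
  have hq1 : (1 : ℝ) ≤ ((n / k : ℕ) : ℝ) := by exact_mod_cast hdiv1
  have hq2 : (n : ℝ) ≤ k * (((n / k : ℕ) : ℝ) + 1) := by exact_mod_cast hmod.le
  have hq3 : k * ((n / k : ℕ) : ℝ) ≤ n := by exact_mod_cast hmod2
  have hlow : ∀ U ∈ P.parts, (n : ℝ) / (2 * k) ≤ (#U : ℝ) := fun U hU => by
    have h1 := hPe.average_le_card_part hU
    rw [Finset.card_univ, Fintype.card_fin, ← hk] at h1
    have h2 : ((n / k : ℕ) : ℝ) ≤ #U := by exact_mod_cast h1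
    refine le_trans ?_ h2
    rw [div_le_iff₀ (by positivity)]
    nlinarith
  have hupp : ∀ U ∈ P.parts, (#U : ℝ) ≤ 4 * ((n : ℝ) / (2 * k)) := fun U hU => by
    have h1 := hPe.card_part_le_average_add_one hU
    rw [Finset.card_univ, Fintype.card_fin, ← hk] at h1
    have h2 : (#U : ℝ) ≤ ((n / k : ℕ) : ℝ) + 1 := by exact_mod_cast h1
    refine h2.trans ?_
    rw [← mul_div_assoc, le_div_iff₀ (by positivity)]
    nlinarith
  have hclique : ∀ s : Finset (Fin n), η * e / (2 ^ p * K) * n < (#s : ℝ) →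
      ∃ t ⊆ s, G.IsNClique p t := fun s hs =>
    exists_clique_of_alphaP_lt (by exact_mod_cast hα.trans_lt hs)
  have ha : 2 ^ p * (η * e / (2 ^ p * K) * n) ≤ 2 * η * e * ((n : ℝ) / (2 * k)) := by
    have h1 : 2 ^ p * (η * e / (2 ^ p * K) * n) = η * e * n / K := by field_simp
    have h2 : 2 * η * e * ((n : ℝ) / (2 * k)) = η * e * n / k := by field_simp
    rw [h1, h2]
    gcongr
  have hQ : quadForm (reducedWeight G e η)
      (fun U => (#U : ℝ) / Fintype.card (Fin n)) P.parts ≤ c + 2 * η := by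
    refine quadForm_le (reducedWeight_comm G e η) (fun U => by simp [reducedWeight]) hp' hη0
      (fun U W h => (reducedWeight_of_ne_zero h).2.1) (fun U => by positivity) ?_ ?_
    · rw [← sum_div, Fintype.card_fin, div_eq_one_iff_eq hnr.ne']
      have := P.sum_card_parts
      rw [Finset.card_univ, Fintype.card_fin] at this
      exact_mod_cast this
    · intro T hT h2 h7 hTc U hU W hW hUW
      exact reducedWeight_lt hp0 hη0 hη1 he0 (by rw [he]; linarith) (by positivity) (by positivity)
        ha hclique hfree (fun U hU => hlow U (hT hU)) (fun U hU => hupp U (hT hU)) h2 h7 hTc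
        hU hW hUW
  have hE := two_mul_edgeCount_le he0 hη0 P hPe hPu hupp
  rw [Fintype.card_fin] at hE hQ
  have hD : 4 * ((n : ℝ) / (2 * k)) * n ≤ η * n ^ 2 := by
    have h1 : 2 / η ≤ k := (Nat.le_ceil _).trans (by rw [← hl]; exact_mod_cast hPl)
    rw [div_le_iff₀ hη0] at h1
    have h2 : 4 * ((n : ℝ) / (2 * k)) * n = 2 / k * n ^ 2 := by field_simp; ring
    rw [h2]
    gcongr
    rw [div_le_iff₀ hkr]; linarith
  have he4 : 4 * e ≤ η := by
    have : η ^ 5 ≤ η := pow_le_of_le_one hη0.le hη1 (by norm_num)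
    rw [he]; linarith
  have hE2 : 2 * (edgeCount G : ℝ) ≤ (c + δ / 2) * n ^ 2 := by
    refine hE.trans ((add_le_add_right hD _).trans ?_)
    rw [← add_mul]
    exact mul_le_mul_of_nonneg_right (by linarith) (by positivity)
  have hchoose : (n.choose 2 : ℝ) = n * (n - 1) / 2 := by
    rw [Nat.cast_choose_two]
  rw [hchoose]
  rw [div_le_iff₀ hδ] at hnδ
  nlinarith
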